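/- arXiv:2602.08767 — 2 statements merged into one kernel-verified Lean document; each statement's English description precedes it below -/
import Mathlib

section
/- Let a, b > 0, let T ∈ (0, ∞], and let V : [0,T) → ℝ be differentiable with V(t) ≥ 0 and V′(t) ≤ −aV(t) + bV(t)^{3/2} for all t ∈ [0,T). If V(0) < (a/b)², then, with μ := a − b√(V(0)) > 0, one has V(t) ≤ V(0)·e^{−μt} for all t ∈ [0,T). -/
/-!
Write the inequality as `V' ≤ -φ(V) V` with the decreasing rate `φ v = a - b √v`, which is positive
exactly below the threshold `(a / b) ^ 2`. Every level strictly between `V 0` and the threshold is a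
barrier, since `V' < 0` there; hence `V` never exceeds `V 0`, so the rate is always at least
`φ (V 0) = μ`, and the linear Grönwall inequality applies.
-/

open Set

section DerivRight

variable {f f' : ℝ → ℝ} {a b : ℝ}

theorem image_le_mul_exp_of_deriv_right_le {K : ℝ} (hf : ContinuousOn f (Icc a b))
    (hf' : ∀ x ∈ Ico a b, HasDerivWithinAt f (f' x) (Ici x) x)
    (bound : ∀ x ∈ Ico a b, f' x ≤ K * f x) :
    ∀ x ∈ Icc a b, f x ≤ f a * Real.exp (K * (x - a)) := by
  intro x hx
  rw [← gronwallBound_ε0]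
  exact le_gronwallBound_of_liminf_deriv_right_le hf
    (fun y hy _ hr => (hf' y hy).liminf_right_slope_le hr) le_rfl
    (fun y hy => by simpa only [add_zero] using bound y hy) x hx

theorem image_le_left_of_deriv_right_neg_of_mem_Ioo {d : ℝ} (hf : ContinuousOn f (Icc a b))
    (hf' : ∀ x ∈ Ico a b, HasDerivWithinAt f (f' x) (Ici x) x) (hd : f a < d)
    (hneg : ∀ x ∈ Ico a b, f x ∈ Ioo (f a) d → f' x < 0) :
    ∀ x ∈ Icc a b, f x ≤ f a := by
  intro x hx
  by_contra! hlt
  obtain ⟨c, hac, hc⟩ := exists_between (lt_min hlt hd)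
  obtain ⟨hcx, hcd⟩ := lt_min_iff.1 hc
  have le_level : f x ≤ c :=
    image_le_of_deriv_right_lt_deriv_boundary hf hf' hac.le (fun y => hasDerivAt_const y c)
      (fun y hy hyc => hneg y hy (hyc ▸ ⟨hac, hcd⟩)) hx
  exact hcx.not_ge le_level

theorem image_le_mul_exp_of_deriv_right_le_neg_rate_mul {φ : ℝ → ℝ} {d : ℝ}
    (hf : ContinuousOn f (Icc a b))
    (hf' : ∀ x ∈ Ico a b, HasDerivWithinAt f (f' x) (Ici x) x)
    (hf₀ : ∀ x ∈ Ico a b, 0 ≤ f x) (bound : ∀ x ∈ Ico a b, f' x ≤ -φ (f x) * f x)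
    (hφ : AntitoneOn φ (Icc 0 (f a))) (hd : f a < d) (hφ_pos : ∀ v ∈ Ioo (f a) d, 0 < φ v) :
    ∀ x ∈ Icc a b, f x ≤ f a * Real.exp (-φ (f a) * (x - a)) := by
  have deriv_neg : ∀ x ∈ Ico a b, f x ∈ Ioo (f a) d → f' x < 0 := by
    intro x hx hfx
    have hfa : 0 ≤ f a := hf₀ a (left_mem_Ico.2 (hx.1.trans_lt hx.2))
    have : 0 < φ (f x) * f x := mul_pos (hφ_pos _ hfx) (hfa.trans_lt hfx.1)
    linarith [bound x hx]
  have le_left : ∀ x ∈ Icc a b, f x ≤ f a :=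
    image_le_left_of_deriv_right_neg_of_mem_Ioo hf hf' hd deriv_neg
  refine image_le_mul_exp_of_deriv_right_le hf hf' fun x hx => (bound x hx).trans ?_
  have hfx : 0 ≤ f x := hf₀ x hx
  have hfx_le : f x ≤ f a := le_left x (Ico_subset_Icc_self hx)
  have rate_le : φ (f a) ≤ φ (f x) := hφ ⟨hfx, hfx_le⟩ ⟨hfx.trans hfx_le, le_rfl⟩ hfx_le
  exact mul_le_mul_of_nonneg_right (neg_le_neg rate_le) hfx

end DerivRight

theorem rpow_three_halves_eq_mul_sqrt {v : ℝ} (hv : 0 ≤ v) : v ^ ((3 : ℝ) / 2) = v * √v := by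
  rw [Real.rpow_div_two_eq_sqrt 3 hv, Real.rpow_ofNat, pow_succ, Real.sq_sqrt hv]

theorem sub_mul_sqrt_pos_iff {a b v : ℝ} (ha : 0 < a) (hb : 0 < b) :
    0 < a - b * √v ↔ v < (a / b) ^ 2 := by
  rw [sub_pos, ← lt_div_iff₀' hb, Real.sqrt_lt' (div_pos ha hb)]

theorem antitone_sub_mul_sqrt (a : ℝ) {b : ℝ} (hb : 0 ≤ b) : Antitone fun v => a - b * √v :=
  fun _ _ h => sub_le_sub_left (mul_le_mul_of_nonneg_left (Real.sqrt_le_sqrt h) hb) a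

/-- comparison/Grönwall-type lemma: if `V ≥ 0` is differentiable on `[0,T)`
(`T ∈ (0,∞]`) with `V' ≤ −aV + bV^{3/2}` and `V(0) < (a/b)²`, then with
`μ := a − b√(V(0)) > 0` one has `V(t) ≤ V(0)e^{−μt}` on `[0,T)`. -/
theorem statement11 (a b : ℝ) (ha : 0 < a) (hb : 0 < b) (T : EReal) (hT : 0 < T)
    (V V' : ℝ → ℝ)
    (hdiff : ∀ t : ℝ, 0 ≤ t → (t : EReal) < T →
      HasDerivWithinAt V (V' t) {s : ℝ | 0 ≤ s ∧ (s : EReal) < T} t)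
    (hnonneg : ∀ t : ℝ, 0 ≤ t → (t : EReal) < T → 0 ≤ V t)
    (hineq : ∀ t : ℝ, 0 ≤ t → (t : EReal) < T →
      V' t ≤ -a * V t + b * V t ^ ((3 : ℝ) / 2))
    (hV0 : V 0 < (a / b) ^ 2) :
    0 < a - b * Real.sqrt (V 0) ∧
      ∀ t : ℝ, 0 ≤ t → (t : EReal) < T →
        V t ≤ V 0 * Real.exp (-(a - b * Real.sqrt (V 0)) * t) := by
  refine ⟨(sub_mul_sqrt_pos_iff ha hb).2 hV0, fun t ht htT => ?_⟩
  have hsub : Icc 0 t ⊆ {s : ℝ | 0 ≤ s ∧ (s : EReal) < T} := fun s hs =>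
    ⟨hs.1, (EReal.coe_le_coe_iff.2 hs.2).trans_lt htT⟩
  have hderiv : ∀ s ∈ Icc 0 t, HasDerivWithinAt V (V' s) (Icc 0 t) s := fun s hs =>
    (hdiff s (hsub hs).1 (hsub hs).2).mono hsub
  have hcont : ContinuousOn V (Icc 0 t) := fun s hs => (hderiv s hs).continuousWithinAt
  have hright : ∀ s ∈ Ico 0 t, HasDerivWithinAt V (V' s) (Ici s) s := fun s hs =>
    (hderiv s (Ico_subset_Icc_self hs)).mono_of_mem_nhdsWithin (Icc_mem_nhdsGE_of_mem hs)
  have hV : ∀ s ∈ Ico 0 t, 0 ≤ V s := fun s hs =>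
    hnonneg s hs.1 (hsub (Ico_subset_Icc_self hs)).2
  have hrate : ∀ s ∈ Ico 0 t, V' s ≤ -(a - b * √(V s)) * V s := by
    intro s hs
    have h := hineq s hs.1 (hsub (Ico_subset_Icc_self hs)).2
    rw [rpow_three_halves_eq_mul_sqrt (hV s hs)] at h
    linarith
  simpa only [sub_zero] using
    image_le_mul_exp_of_deriv_right_le_neg_rate_mul (φ := fun v => a - b * √v) hcont hright hV
      hrate ((antitone_sub_mul_sqrt a hb.le).antitoneOn _) hV0
      (fun v hv => (sub_mul_sqrt_pos_iff ha hb).2 hv.2) t ⟨ht, le_rfl⟩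
end

section
/- (Backstepping transformation of the PDE subsystem.) Let θ ≥ 0, Σ : ℝ² → M₂(ℝ) continuous, v* ∈ ℝ², z* ∈ C⁰([0,1]; ℝ²), q > 0, A₁* := A₁ + qI₂, and ϖ(X) := −G₁⁻¹A₁*X for X ∈ ℝ². Let M ∈ C¹([0,1]; M₂(ℝ)) and N ∈ M₂(ℝ) satisfy M(0) = 0, ∫₀¹ K₁(ξ)M(ξ) dξ = I₂, and Λ M′(ξ) = θ Σ(v*)(M(ξ) + (𝒦₂M)) + (𝒦₃M) + HN on (0,1). Let T > 0, let U_δ, w : [0,T] → ℝ² be continuous, let X_δ ∈ C¹([0,T]; ℝ²), and let z_δ : [0,1]×[0,T] → ℝ² be a C¹ function with z_δ(0,t) = 0 satisfying X_δ′(t) = A₁X_δ(t) + G₁(𝒦₁ z_δ(·,t)) and ∂z_δ/∂t + Λ ∂z_δ/∂ξ = θ Σ(w(t))[z_δ(ξ,t) + (𝒦₂ z_δ(·,t))] + (𝒦₃ z_δ(·,t)) + θ(Σ(w(t)) − Σ(v*))[z*(ξ) + (𝒦₂z*)] + H(A₂X_δ(t) + G₂U_δ(t)) on (0,1)×(0,T).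 Then ζ(ξ,t) := z_δ(ξ,t) − M(ξ)ϖ(X_δ(t)) satisfies ζ(0,t) = 0, (𝒦₁ ζ(·,t)) = (𝒦₁ z_δ(·,t)) − ϖ(X_δ(t)), and ∂ζ/∂t + Λ ∂ζ/∂ξ = θ Σ(w(t))[ζ(ξ,t) + (𝒦₂ ζ(·,t))] + (𝒦₃ ζ(·,t)) + θ(Σ(w(t)) − Σ(v*))[z*(ξ) + (𝒦₂z*)] + H[(A₂X_δ(t) + G₂U_δ(t)) − Nϖ(X_δ(t))] + θ(Σ(w(t)) − Σ(v*))[M(ξ) + (𝒦₂M)]ϖ(X_δ(t)) − M(ξ)·ϖ̇(t), where ϖ̇(t) := −G₁⁻¹A₁*X_δ′(t). -/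
open MeasureTheory Matrix Set

noncomputable section

attribute [local instance] Matrix.normedAddCommGroup Matrix.normedSpace

abbrev Vec2 := Fin 2 → ℝ
abbrev Mat2 := Matrix (Fin 2) (Fin 2) ℝ

/-- Nondimensional pressure distribution `p̄(ξ) = (a/(1-e^{-a})) e^{-aξ}`. -/
def pbar (a ξ : ℝ) : ℝ := a / (1 - Real.exp (-a)) * Real.exp (-a * ξ)

/-- The physical parameters of the single-track tire model. -/
structure TireParams where
  vx : ℝ
  L1 : ℝ
  L2 : ℝ
  Fz1 : ℝ
  Fz2 : ℝ
  σ1 : ℝ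
  σ2 : ℝ
  a1 : ℝ
  a2 : ℝ
  φ1 : ℝ
  φ2 : ℝ
  vx_pos : 0 < vx
  L1_pos : 0 < L1
  L2_pos : 0 < L2
  Fz1_pos : 0 < Fz1
  Fz2_pos : 0 < Fz2
  σ1_pos : 0 < σ1
  σ2_pos : 0 < σ2
  a1_pos : 0 < a1
  a2_pos : 0 < a2
  φ1_mem : φ1 ∈ Set.Ioc (0:ℝ) 1
  φ2_mem : φ2 ∈ Set.Ioc (0:ℝ) 1

namespace TireParams

variable (P : TireParams)

def ψ1 : ℝ := 1 - P.φ1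
def ψ2 : ℝ := 1 - P.φ2

def Λmat : Mat2 := Matrix.diagonal ![P.vx / P.L1, P.vx / P.L2]

def Hmat : Mat2 := (2:ℝ) • Matrix.diagonal ![P.φ1, P.φ2]

def K1 (ξ : ℝ) : Mat2 :=
  Matrix.diagonal ![P.Fz1 * P.σ1 * pbar P.a1 ξ, P.Fz2 * P.σ2 * pbar P.a2 ξ]

def K2 (ξ : ℝ) : Mat2 :=
  -Matrix.diagonal ![P.ψ1 * pbar P.a1 ξ, P.ψ2 * pbar P.a2 ξ]

def K3 (ξ : ℝ) : Mat2 :=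
  -P.vx • Matrix.diagonal ![P.ψ1 / P.L1 * deriv (pbar P.a1) ξ, P.ψ2 / P.L2 * deriv (pbar P.a2) ξ]

def K4 : Mat2 :=
  P.vx • Matrix.diagonal ![P.ψ1 / P.L1 * pbar P.a1 1, P.ψ2 / P.L2 * pbar P.a2 1]

def Q (ξ : ℝ) : Mat2 := P.K1 ξ * (P.Hmat)⁻¹

/-- `(𝒦ζ) = ∫₀¹ K(ξ) ζ(ξ) dξ`. -/
def Kop (K : ℝ → Mat2) (ζ : ℝ → Vec2) : Vec2 := ∫ ξ in (0:ℝ)..1, (K ξ).mulVec (ζ ξ)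

def K1op (ζ : ℝ → Vec2) : Vec2 := Kop P.K1 ζ

def K2op (ζ : ℝ → Vec2) : Vec2 := Kop P.K2 ζ

/-- `(𝒦₃ζ) = ∫₀¹ K₃(ξ)ζ(ξ)dξ + K₄ ζ(1)`. -/
def K3op (ζ : ℝ → Vec2) : Vec2 := Kop P.K3 ζ + (P.K4).mulVec (ζ 1)

/-- `(𝒜ζ)(ξ) = -Λ ζ'(ξ) + (𝒦₃ζ)`, expressed through a given derivative `ζ'`. -/
def Aop (ζ ζ' : ℝ → Vec2) (ξ : ℝ) : Vec2 := -(P.Λmat).mulVec (ζ' ξ) + P.K3op ζ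

end TireParams

/-- `ζ` is C¹ on `[0,1]` with derivative `ζ'`. -/
def IsC1On01 (ζ ζ' : ℝ → Vec2) : Prop :=
  (∀ ξ ∈ Icc (0:ℝ) 1, HasDerivWithinAt ζ (ζ' ξ) (Icc (0:ℝ) 1) ξ) ∧
    ContinuousOn ζ' (Icc (0:ℝ) 1)

/-- Square integrability on `(0,1)`. -/
def SqIntegrableOn01 (ζ : ℝ → Vec2) : Prop :=
  Measurable ζ ∧ IntervalIntegrable (fun ξ => ∑ i, (ζ ξ i) ^ 2) volume 0 1

/-- Assumption 1 (strict dissipativity of `𝒜`). -/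
def Assumption1 (P : TireParams) (ω : ℝ) : Prop :=
  ∀ ζ ζ' : ℝ → Vec2, IsC1On01 ζ ζ' → ζ 0 = 0 →
    (∫ ξ in (0:ℝ)..1, P.Aop ζ ζ' ξ ⬝ᵥ (P.Q ξ).mulVec (ζ ξ)) ≤
      -ω * ∫ ξ in (0:ℝ)..1, ∑ i, (ζ ξ i) ^ 2

/-- Assumption 2 (dissipativity of the source `Σ`). -/
def Assumption2 (P : TireParams) (S : Vec2 → Mat2) : Prop :=
  ∀ y : Vec2, ∀ ζ : ℝ → Vec2, SqIntegrableOn01 ζ →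
    (∫ ξ in (0:ℝ)..1, ζ ξ ⬝ᵥ (P.Q ξ).mulVec ((S y).mulVec (ζ ξ + P.K2op ζ))) ≤ 0

/-- Matrix-valued `M` is C¹ on `[0,1]` with derivative `M'`. -/
def IsC1MatOn01 (M M' : ℝ → Mat2) : Prop :=
  (∀ ξ ∈ Icc (0:ℝ) 1, HasDerivWithinAt M (M' ξ) (Icc (0:ℝ) 1) ξ) ∧
    ContinuousOn M' (Icc (0:ℝ) 1)

def A1mat (vx : ℝ) : Mat2 := !![0, -vx; 0, 0]

def A2mat (l1 l2 : ℝ) : Mat2 := !![1, l1; 1, -l2]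

def G1mat (m Iz l1 l2 : ℝ) : Mat2 := -!![1/m, 1/m; l1/Iz, -l2/Iz]

def G2mat (vx : ℝ) : Mat2 := -vx • (1 : Mat2)

/-- `(𝒦M) = ∫₀¹ K(ξ)M(ξ)dξ` for matrix-valued `M`. -/
def KopM (K : ℝ → Mat2) (M : ℝ → Mat2) : Mat2 := ∫ ξ in (0:ℝ)..1, K ξ * M ξ

/-- The virtual control law `ϖ(X) = −G₁⁻¹(A₁ + qI₂)X`. -/
def varpi (G1 A1 : Mat2) (q : ℝ) (X : Vec2) : Vec2 :=
  -(G1⁻¹ * (A1 + q • (1 : Mat2))).mulVec X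

/-- `ϖ̇(t) = −G₁⁻¹A₁*X_δ'(t)`. -/
def varpidot (G1 A1 : Mat2) (q : ℝ) (Xδ' : ℝ → Vec2) (t : ℝ) : Vec2 :=
  -(G1⁻¹ * (A1 + q • (1 : Mat2))).mulVec (Xδ' t)

/-!
For a constant vector `v` the column `M v` solves the stationary equation with source matrix
`Σ(v*)` and input `N v`. Multiplying the equation of `M` by `ϖ` and subtracting it from the
equation of `z_δ` gives the target equation, with two remainders: `θ (Σ(w) - Σ(v*)) (M + 𝒦₂M) ϖ`,
because the two equations have different source matrices, and `-M ϖ̇`, because `ϖ` depends on time.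
-/

section MulVec

variable {m n p : Type*} [Fintype n]

theorem continuousOn_matrix_mul {X R : Type*} [TopologicalSpace X] [TopologicalSpace R]
    [NonUnitalNonAssocSemiring R] [IsTopologicalSemiring R] {A : X → Matrix m n R}
    {B : X → Matrix n p R} {s : Set X} (hA : ContinuousOn A s) (hB : ContinuousOn B s) :
    ContinuousOn (fun x => A x * B x) s :=
  continuousOn_iff_continuous_domRestrict.2 (hA.domRestrict.matrix_mul hB.domRestrict)

theorem continuousOn_mulVec {X R : Type*} [TopologicalSpace X] [TopologicalSpace R]
    [NonUnitalNonAssocSemiring R] [IsTopologicalSemiring R] {A : X → Matrix m n R}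
    {v : X → n → R} {s : Set X} (hA : ContinuousOn A s) (hv : ContinuousOn v s) :
    ContinuousOn (fun x => A x *ᵥ v x) s :=
  continuousOn_iff_continuous_domRestrict.2 (hA.domRestrict.matrix_mulVec hv.domRestrict)

theorem hasDerivWithinAt_mulVec_const [Finite m] {𝕜 : Type*} [NontriviallyNormedField 𝕜]
    {A : 𝕜 → Matrix m n 𝕜} {A' : Matrix m n 𝕜} {s : Set 𝕜} {x : 𝕜}
    (hA : HasDerivWithinAt A A' s x) (v : n → 𝕜) :
    HasDerivWithinAt (fun y => A y *ᵥ v) (A' *ᵥ v) s x :=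
  hasDerivWithinAt_pi.2 fun i => HasDerivWithinAt.fun_sum fun j _ =>
    (hasDerivWithinAt_pi.1 (hasDerivWithinAt_pi.1 hA i) j).mul_const (v j)

theorem hasDerivWithinAt_const_mulVec [Finite m] {𝕜 : Type*} [NontriviallyNormedField 𝕜]
    (A : Matrix m n 𝕜) {v : 𝕜 → n → 𝕜} {v' : n → 𝕜} {s : Set 𝕜} {x : 𝕜}
    (hv : HasDerivWithinAt v v' s x) :
    HasDerivWithinAt (fun y => A *ᵥ v y) (A *ᵥ v') s x :=
  hasDerivWithinAt_pi.2 fun i => HasDerivWithinAt.fun_sum fun j _ =>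
    (hasDerivWithinAt_pi.1 hv j).const_mul (A i j)

variable [Fintype m] [Fintype p] {𝕜 : Type*} [RCLike 𝕜] {μ : Measure ℝ} [IsLocallyFiniteMeasure μ]
  {a b : ℝ}

theorem intervalIntegral_mulVec_const {A : ℝ → Matrix m n 𝕜} (hA : ContinuousOn A (uIcc a b))
    (v : n → 𝕜) :
    ∫ x in a..b, A x *ᵥ v ∂μ = (∫ x in a..b, A x ∂μ) *ᵥ v :=
  ((mulVecBilin 𝕜 𝕜).flip v).toContinuousLinearMap.intervalIntegral_comp_comm
    (ContinuousOn.intervalIntegrable (E := Matrix m n 𝕜) hA)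

theorem intervalIntegral_mulVec_sub_mulVec_const {K : ℝ → Matrix m n 𝕜} {M : ℝ → Matrix n p 𝕜}
    {z : ℝ → n → 𝕜} (hK : ContinuousOn K (uIcc a b)) (hM : ContinuousOn M (uIcc a b))
    (hz : ContinuousOn z (uIcc a b)) (v : p → 𝕜) :
    ∫ x in a..b, K x *ᵥ (z x - M x *ᵥ v) ∂μ =
      (∫ x in a..b, K x *ᵥ z x ∂μ) - (∫ x in a..b, K x * M x ∂μ) *ᵥ v := by
  have hKM : ContinuousOn (fun x => K x * M x) (uIcc a b) := continuousOn_matrix_mul hK hM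
  have hKMv : ContinuousOn (fun x => (K x * M x) *ᵥ v) (uIcc a b) :=
    continuousOn_mulVec hKM continuousOn_const
  rw [← intervalIntegral_mulVec_const hKM,
    ← intervalIntegral.integral_sub (continuousOn_mulVec hK hz).intervalIntegrable
      hKMv.intervalIntegrable]
  simp only [mulVec_sub, mulVec_mulVec]

end MulVec

theorem contDiff_pbar (a : ℝ) {r : WithTop ℕ∞} : ContDiff ℝ r (pbar a) := by
  unfold pbar
  fun_prop

@[fun_prop]
theorem continuous_pbar (a : ℝ) : Continuous (pbar a) :=
  (contDiff_pbar a (r := 0)).continuous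

@[fun_prop]
theorem continuous_deriv_pbar (a : ℝ) : Continuous (deriv (pbar a)) :=
  (contDiff_pbar a).continuous_deriv le_rfl

namespace TireParams

variable (P : TireParams)

theorem continuous_K1 : Continuous P.K1 := by
  unfold K1
  fun_prop

theorem continuous_K2 : Continuous P.K2 := by
  unfold K2
  fun_prop

theorem continuous_K3 : Continuous P.K3 := by
  unfold K3
  fun_prop

end TireParams

theorem hasDerivWithinAt_varpi (G A : Mat2) (q : ℝ) {X X' : ℝ → Vec2} {s : Set ℝ} {t : ℝ}
    (hX : HasDerivWithinAt X (X' t) s t) :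
    HasDerivWithinAt (fun τ => varpi G A q (X τ)) (varpidot G A q X' t) s t :=
  (hasDerivWithinAt_const_mulVec _ hX).neg

section Backstepping

variable {n p k : Type*} [Fintype n] [Fintype p] [Fintype k]

theorem backstepping_target_identity {R : Type*} [CommRing R] {θ : R}
    {Λ S S₀ : Matrix n n R} {M M' κ₂ κ₃ : Matrix n p R} {H : Matrix n k R} {N : Matrix k p R}
    {z zξ zt y₂ y₃ f : n → R} {u : k → R} (v v' : p → R)
    (hM : Λ * M' = θ • (S₀ * (M + κ₂)) + κ₃ + H * N)
    (hz : zt + Λ *ᵥ zξ = θ • S *ᵥ (z + y₂) + y₃ + f + H *ᵥ u) :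
    (zt - M *ᵥ v') + Λ *ᵥ (zξ - M' *ᵥ v) =
      θ • S *ᵥ ((z - M *ᵥ v) + (y₂ - κ₂ *ᵥ v)) + (y₃ - κ₃ *ᵥ v) + f + H *ᵥ (u - N *ᵥ v) +
        θ • ((S - S₀) * (M + κ₂)) *ᵥ v - M *ᵥ v' := by
  have hMv : Λ *ᵥ M' *ᵥ v = θ • S₀ *ᵥ (M + κ₂) *ᵥ v + κ₃ *ᵥ v + H *ᵥ N *ᵥ v := by
    rw [mulVec_mulVec, hM, add_mulVec, add_mulVec, smul_mulVec, mulVec_mulVec, mulVec_mulVec]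
  have hsource : S *ᵥ ((z - M *ᵥ v) + (y₂ - κ₂ *ᵥ v)) =
      S *ᵥ (z + y₂) - S *ᵥ (M + κ₂) *ᵥ v := by
    rw [← mulVec_sub, add_mulVec, add_sub_add_comm]
  have hmismatch : ((S - S₀) * (M + κ₂)) *ᵥ v = S *ᵥ (M + κ₂) *ᵥ v - S₀ *ᵥ (M + κ₂) *ᵥ v := by
    rw [← mulVec_mulVec, sub_mulVec]
  rw [hsource, hmismatch, mulVec_sub, mulVec_sub, smul_sub, smul_sub]
  linear_combination hz - hMv

theorem statement12_general [DecidableEq p] {K₁ : ℝ → Matrix p n ℝ} {K₂ K₃ : ℝ → Matrix n n ℝ}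
    (hK₁ : ContinuousOn K₁ (Icc 0 1)) (hK₂ : ContinuousOn K₂ (Icc 0 1))
    (hK₃ : ContinuousOn K₃ (Icc 0 1)) {K₄ Λ S₀ : Matrix n n ℝ} {S : ℝ → Matrix n n ℝ}
    {H : Matrix n k ℝ} {N : Matrix k p ℝ} {θ T : ℝ} {M M' : ℝ → Matrix n p ℝ}
    (hM : ∀ ξ ∈ Icc (0 : ℝ) 1, HasDerivWithinAt M (M' ξ) (Icc 0 1) ξ) (hM_zero : M 0 = 0)
    (hM_norm : ∫ ξ in (0 : ℝ)..1, K₁ ξ * M ξ = 1)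
    (hM_ode : ∀ ξ ∈ Ioo (0 : ℝ) 1,
      Λ * M' ξ = θ • (S₀ * (M ξ + ∫ s in (0 : ℝ)..1, K₂ s * M s)) +
        ((∫ s in (0 : ℝ)..1, K₃ s * M s) + K₄ * M 1) + H * N)
    {v v' : ℝ → p → ℝ} (hv : ∀ t ∈ Icc 0 T, HasDerivWithinAt v (v' t) (Icc 0 T) t)
    {u : ℝ → k → ℝ} {f z zξ zt : ℝ → ℝ → n → ℝ}
    (hzξ : ∀ t ∈ Icc 0 T, ∀ ξ ∈ Icc (0 : ℝ) 1,
      HasDerivWithinAt (fun s => z s t) (zξ ξ t) (Icc 0 1) ξ)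
    (hzt : ∀ ξ ∈ Icc (0 : ℝ) 1, ∀ t ∈ Icc 0 T,
      HasDerivWithinAt (fun s => z ξ s) (zt ξ t) (Icc 0 T) t)
    (hz_zero : ∀ t ∈ Icc 0 T, z 0 t = 0)
    (hz_pde : ∀ ξ ∈ Ioo (0 : ℝ) 1, ∀ t ∈ Ioo 0 T,
      zt ξ t + Λ *ᵥ zξ ξ t =
        θ • S t *ᵥ (z ξ t + ∫ s in (0 : ℝ)..1, K₂ s *ᵥ z s t) +
          ((∫ s in (0 : ℝ)..1, K₃ s *ᵥ z s t) + K₄ *ᵥ z 1 t) + f ξ t + H *ᵥ u t)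
    (ζ : ℝ → ℝ → n → ℝ) (hζ : ∀ ξ t, ζ ξ t = z ξ t - M ξ *ᵥ v t) :
    (∀ t ∈ Icc 0 T, ζ 0 t = 0) ∧
    (∀ t ∈ Icc 0 T,
      ∫ ξ in (0 : ℝ)..1, K₁ ξ *ᵥ ζ ξ t = (∫ ξ in (0 : ℝ)..1, K₁ ξ *ᵥ z ξ t) - v t) ∧
    ∀ ξ ∈ Ioo (0 : ℝ) 1, ∀ t ∈ Ioo 0 T,
      HasDerivWithinAt (fun s => ζ s t) (zξ ξ t - M' ξ *ᵥ v t) (Icc 0 1) ξ ∧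
      HasDerivWithinAt (fun s => ζ ξ s) (zt ξ t - M ξ *ᵥ v' t) (Icc 0 T) t ∧
      (zt ξ t - M ξ *ᵥ v' t) + Λ *ᵥ (zξ ξ t - M' ξ *ᵥ v t) =
        θ • S t *ᵥ (ζ ξ t + ∫ s in (0 : ℝ)..1, K₂ s *ᵥ ζ s t) +
          ((∫ s in (0 : ℝ)..1, K₃ s *ᵥ ζ s t) + K₄ *ᵥ ζ 1 t) + f ξ t +
          H *ᵥ (u t - N *ᵥ v t) +
          θ • ((S t - S₀) * (M ξ + ∫ s in (0 : ℝ)..1, K₂ s * M s)) *ᵥ v t - M ξ *ᵥ v' t := by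
  obtain rfl : ζ = fun ξ t => z ξ t - M ξ *ᵥ v t := funext₂ hζ
  have hM_cont : ContinuousOn M (uIcc 0 1) :=
    uIcc_of_le (zero_le_one' ℝ) ▸ HasDerivWithinAt.continuousOn hM
  have hz_cont : ∀ t ∈ Icc 0 T, ContinuousOn (fun ξ => z ξ t) (uIcc 0 1) := fun t ht =>
    uIcc_of_le (zero_le_one' ℝ) ▸ HasDerivWithinAt.continuousOn (hzξ t ht)
  rw [← uIcc_of_le (zero_le_one' ℝ)] at hK₁ hK₂ hK₃
  beta_reduce
  refine ⟨fun t ht => ?boundary, fun t ht => ?output, fun ξ hξ t ht => ?interior⟩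
  case boundary => rw [hz_zero t ht, hM_zero, zero_mulVec, sub_zero]
  case output =>
    rw [intervalIntegral_mulVec_sub_mulVec_const hK₁ hM_cont (hz_cont t ht), hM_norm, one_mulVec]
  case interior =>
    have hξ' := Ioo_subset_Icc_self hξ
    have ht' := Ioo_subset_Icc_self ht
    refine ⟨(hzξ t ht' ξ hξ').sub (hasDerivWithinAt_mulVec_const (hM ξ hξ') (v t)),
      (hzt ξ hξ' t ht').sub (hasDerivWithinAt_const_mulVec (M ξ) (hv t ht')), ?_⟩
    have hK₃_sub :
        (∫ s in (0 : ℝ)..1, K₃ s *ᵥ (z s t - M s *ᵥ v t)) + K₄ *ᵥ (z 1 t - M 1 *ᵥ v t) =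
          ((∫ s in (0 : ℝ)..1, K₃ s *ᵥ z s t) + K₄ *ᵥ z 1 t) -
            ((∫ s in (0 : ℝ)..1, K₃ s * M s) + K₄ * M 1) *ᵥ v t := by
      rw [intervalIntegral_mulVec_sub_mulVec_const hK₃ hM_cont (hz_cont t ht'), mulVec_sub,
        mulVec_mulVec, add_mulVec, add_sub_add_comm]
    rw [intervalIntegral_mulVec_sub_mulVec_const hK₂ hM_cont (hz_cont t ht'), hK₃_sub]
    exact backstepping_target_identity (v t) (v' t) (hM_ode ξ hξ) (hz_pde ξ hξ t ht)

end Backstepping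

/-- backstepping transformation of the PDE subsystem: the transformed state
`ζ(ξ,t) = z_δ(ξ,t) − M(ξ)ϖ(X_δ(t))` vanishes at `ξ = 0`, satisfies
`𝒦₁ζ = 𝒦₁z_δ − ϖ(X_δ)`, and solves the target PDE. -/
theorem statement12 (P : TireParams) (m Iz l1 l2 : ℝ)
    (hm : 0 < m) (hIz : 0 < Iz) (hl1 : 0 < l1) (hl2 : 0 < l2)
    (θ : ℝ) (hθ : 0 ≤ θ) (S : Vec2 → Mat2) (hS : Continuous S)
    (vstar : Vec2) (zstar : ℝ → Vec2) (hzstar : ContinuousOn zstar (Icc (0:ℝ) 1))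
    (q : ℝ) (hq : 0 < q)
    (M M' : ℝ → Mat2) (N : Mat2) (hM : IsC1MatOn01 M M') (hM0 : M 0 = 0)
    (hMnorm : (∫ ξ in (0:ℝ)..1, P.K1 ξ * M ξ) = (1 : Mat2))
    (hMode : ∀ ξ ∈ Ioo (0:ℝ) 1,
      P.Λmat * M' ξ =
        θ • (S vstar * (M ξ + KopM P.K2 M)) + (KopM P.K3 M + P.K4 * M 1) + P.Hmat * N)
    (T : ℝ) (hT : 0 < T) (Uδ w : ℝ → Vec2)
    (hU : ContinuousOn Uδ (Icc (0:ℝ) T)) (hw : ContinuousOn w (Icc (0:ℝ) T))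
    (Xδ Xδ' : ℝ → Vec2)
    (hXδ : ∀ t ∈ Icc (0:ℝ) T, HasDerivWithinAt Xδ (Xδ' t) (Icc (0:ℝ) T) t)
    (hXδ' : ContinuousOn Xδ' (Icc (0:ℝ) T))
    (zδ zδξ zδt : ℝ → ℝ → Vec2)
    (hODE : ∀ t ∈ Ioo (0:ℝ) T,
      Xδ' t = (A1mat P.vx).mulVec (Xδ t) +
        (G1mat m Iz l1 l2).mulVec (P.K1op (fun ξ => zδ ξ t)))
    (hzξ : ∀ t ∈ Icc (0:ℝ) T, ∀ ξ ∈ Icc (0:ℝ) 1,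
      HasDerivWithinAt (fun s => zδ s t) (zδξ ξ t) (Icc (0:ℝ) 1) ξ)
    (hzt : ∀ ξ ∈ Icc (0:ℝ) 1, ∀ t ∈ Icc (0:ℝ) T,
      HasDerivWithinAt (fun s => zδ ξ s) (zδt ξ t) (Icc (0:ℝ) T) t)
    (hzc : ContinuousOn (fun p : ℝ × ℝ => zδ p.1 p.2) (Icc (0:ℝ) 1 ×ˢ Icc (0:ℝ) T))
    (hzξc : ContinuousOn (fun p : ℝ × ℝ => zδξ p.1 p.2) (Icc (0:ℝ) 1 ×ˢ Icc (0:ℝ) T))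
    (hztc : ContinuousOn (fun p : ℝ × ℝ => zδt p.1 p.2) (Icc (0:ℝ) 1 ×ˢ Icc (0:ℝ) T))
    (hbc : ∀ t ∈ Icc (0:ℝ) T, zδ 0 t = 0)
    (hpde : ∀ ξ ∈ Ioo (0:ℝ) 1, ∀ t ∈ Ioo (0:ℝ) T,
      zδt ξ t + (P.Λmat).mulVec (zδξ ξ t) =
        θ • (S (w t)).mulVec (zδ ξ t + P.K2op (fun s => zδ s t)) +
          P.K3op (fun s => zδ s t) +
          θ • ((S (w t) - S vstar).mulVec (zstar ξ + P.K2op zstar)) +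
          (P.Hmat).mulVec ((A2mat l1 l2).mulVec (Xδ t) + (G2mat P.vx).mulVec (Uδ t))) :
    ∀ ζ : ℝ → ℝ → Vec2,
      (∀ ξ t, ζ ξ t =
        zδ ξ t - (M ξ).mulVec (varpi (G1mat m Iz l1 l2) (A1mat P.vx) q (Xδ t))) →
      (∀ t ∈ Icc (0:ℝ) T, ζ 0 t = 0) ∧
      (∀ t ∈ Icc (0:ℝ) T,
        P.K1op (fun ξ => ζ ξ t) =
          P.K1op (fun ξ => zδ ξ t) - varpi (G1mat m Iz l1 l2) (A1mat P.vx) q (Xδ t)) ∧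
      (∀ ξ ∈ Ioo (0:ℝ) 1, ∀ t ∈ Ioo (0:ℝ) T,
        HasDerivWithinAt (fun s => ζ s t)
          (zδξ ξ t - (M' ξ).mulVec (varpi (G1mat m Iz l1 l2) (A1mat P.vx) q (Xδ t)))
          (Icc (0:ℝ) 1) ξ ∧
        HasDerivWithinAt (fun s => ζ ξ s)
          (zδt ξ t - (M ξ).mulVec (varpidot (G1mat m Iz l1 l2) (A1mat P.vx) q Xδ' t))
          (Icc (0:ℝ) T) t ∧
        (zδt ξ t - (M ξ).mulVec (varpidot (G1mat m Iz l1 l2) (A1mat P.vx) q Xδ' t)) +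
            (P.Λmat).mulVec
              (zδξ ξ t - (M' ξ).mulVec (varpi (G1mat m Iz l1 l2) (A1mat P.vx) q (Xδ t))) =
          θ • (S (w t)).mulVec (ζ ξ t + P.K2op (fun s => ζ s t)) +
            P.K3op (fun s => ζ s t) +
            θ • ((S (w t) - S vstar).mulVec (zstar ξ + P.K2op zstar)) +
            (P.Hmat).mulVec
              (((A2mat l1 l2).mulVec (Xδ t) + (G2mat P.vx).mulVec (Uδ t)) -
                N.mulVec (varpi (G1mat m Iz l1 l2) (A1mat P.vx) q (Xδ t))) +
            θ • (((S (w t) - S vstar) * (M ξ + KopM P.K2 M)).mulVec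
              (varpi (G1mat m Iz l1 l2) (A1mat P.vx) q (Xδ t))) -
            (M ξ).mulVec (varpidot (G1mat m Iz l1 l2) (A1mat P.vx) q Xδ' t)) := by
  exact statement12_general P.continuous_K1.continuousOn P.continuous_K2.continuousOn
    P.continuous_K3.continuousOn hM.1 hM0 hMnorm hMode
    (fun t ht => hasDerivWithinAt_varpi _ _ _ (hXδ t ht)) hzξ hzt hbc hpde
end
end
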